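/- Let λ > 0 and let r, ℓ : [0,T) × ℝ → ℝ be a C² solution of the diagonal system ∂ₜr + k(r−ℓ)·∂ₓr = −(λ/2)(r+ℓ), ∂ₜℓ − k(r−ℓ)·∂ₓℓ = −(λ/2)(r+ℓ), with initial data r(0,·) = r₀ = −ℓ(0,·). Assume the forward characteristic flow (t,α) ↦ x₁(t,α) and the backward characteristic flow (t,β) ↦ x₂(t,β) are of class C¹ jointly in both variables. Then the infinitesimal compression ratios c₁(t,α) := ∂_α x₁(t,α) and c₂(t,β) := ∂_β x₂(t,β) are given by c₁(t,α) = √( k(η(t, x₁(t,α))) / k(2r₀(α)) ) · exp( ∫₀ᵗ A(τ)⁻¹·f(η(τ, x₁(τ,α)))·p(τ, x₁(τ,α)) dτ ) > 0 and c₂(t,β) = √( k(η(t, x₂(t,β))) / k(2r₀(β)) ) · exp( ∫₀ᵗ A(τ)⁻¹·f(η(τ, x₂(τ,β)))·q(τ, x₂(τ,β)) dτ ) > 0; in particular both are strictly positive, so characteristics of the same family never cross. -/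

import Mathlib

open Real Set Filter MeasureTheory

noncomputable section

/-- `L(u) = (1/2)(u·√(1+u²) + arcsinh u)`, the antiderivative of `Q(ξ) = √(1+ξ²)` with `L 0 = 0`. -/
def Lfun (u : ℝ) : ℝ := (1/2) * (u * Real.sqrt (1 + u^2) + Real.arsinh u)

/-- `û₁(η) = L⁻¹(−η/2)`. -/
def u1hat (η : ℝ) : ℝ := Function.invFun Lfun (-η/2)

/-- `k(η) = √(1 + û₁(η)²)`. -/
def kfun (η : ℝ) : ℝ := Real.sqrt (1 + (u1hat η)^2)

/-- `f(η) = k'(η)/√(k(η))`. -/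
def ffun (η : ℝ) : ℝ := deriv kfun η / Real.sqrt (kfun η)

/-- `A(t) = exp(λ t / 2)`. -/
def Afun (lam t : ℝ) : ℝ := Real.exp (lam * t / 2)

/-- `η(t,x) = r(t,x) − ℓ(t,x)`. -/
def etafun (r l : ℝ → ℝ → ℝ) (t x : ℝ) : ℝ := r t x - l t x

/-- Weighted Riemann derivative `p(t,x) = A(t)·√(k(η(t,x)))·∂ₓr(t,x)`. -/
def pfun (lam : ℝ) (r l : ℝ → ℝ → ℝ) (t x : ℝ) : ℝ :=
  Afun lam t * Real.sqrt (kfun (etafun r l t x)) * deriv (fun y => r t y) x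

/-- Weighted Riemann derivative `q(t,x) = A(t)·√(k(η(t,x)))·∂ₓℓ(t,x)`. -/
def qfun (lam : ℝ) (r l : ℝ → ℝ → ℝ) (t x : ℝ) : ℝ :=
  Afun lam t * Real.sqrt (kfun (etafun r l t x)) * deriv (fun y => l t y) x

/-!
Two integral curves `γ`, `δ` of a scalar field `v` that is `C¹` in space satisfy
`(δ - γ)' = m (δ - γ)`, where `m` is the average of `∂ₓv` over the segment from `γ` to `δ`. Hence
`δ - γ` keeps its sign, and dividing by `δ(0) - γ(0) → 0` shows that the flow is differentiable in
its initial point with derivative `exp ∫ ∂ₓv`; no regularity of the flow is presupposed.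

For `v = σ k(η)` with `σ = ±1`, the evolution of `η` along a characteristic is
`dη/dt = 2 k(η) (σ ∂ₓη - w)`, where `w` is `∂ₓr` or `∂ₓℓ`. Therefore
`∂ₓv = σ k'(η) ∂ₓη = d/dt (½ log k(η)) + k'(η) w`; the first term integrates to the square root, and
the weights are chosen such that `A⁻¹ f p = k'(η) ∂ₓr` and `A⁻¹ f q = k'(η) ∂ₓℓ`.
-/

open scoped Topology Interval

section ScalarLinearODE

variable {t₀ t₁ : ℝ}

lemma hasDerivAt_integral_of_continuousOn_Icc {m : ℝ → ℝ} (hm : ContinuousOn m (Icc t₀ t₁)) {t : ℝ}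
    (ht : t ∈ Ioo t₀ t₁) : HasDerivAt (fun s => ∫ τ in t₀..s, m τ) (m t) t := by
  refine intervalIntegral.integral_hasDerivAt_right ?_ ?_ ?_
  · exact (hm.mono (Icc_subset_Icc_right ht.2.le)).intervalIntegrable_of_Icc ht.1.le
  · exact (hm.mono Ioo_subset_Icc_self).stronglyMeasurableAtFilter isOpen_Ioo t ht
  · exact hm.continuousAt (Icc_mem_nhds ht.1 ht.2)

lemma eq_mul_exp_integral_of_hasDerivAt {y m : ℝ → ℝ} (h : t₀ ≤ t₁)
    (hy : ContinuousOn y (Icc t₀ t₁)) (hm : ContinuousOn m (Icc t₀ t₁))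
    (hy' : ∀ t ∈ Ioo t₀ t₁, HasDerivAt y (m t * y t) t) :
    y t₁ = y t₀ * exp (∫ s in t₀..t₁, m s) := by
  have hM : ContinuousOn (fun t => ∫ s in t₀..t, m s) (Icc t₀ t₁) :=
    uIcc_of_le h ▸ intervalIntegral.continuousOn_primitive_interval
      (uIcc_of_le h ▸ hm.integrableOn_Icc)
  have hderiv : ∀ t ∈ Ioo t₀ t₁, HasDerivAt (fun t => y t * exp (-∫ s in t₀..t, m s)) 0 t := by
    intro t ht
    have hM' := hasDerivAt_integral_of_continuousOn_Icc hm ht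
    exact ((hy' t ht).mul hM'.neg.exp).congr_deriv (by simp only [Pi.neg_apply]; ring)
  have hconst := intervalIntegral.integral_eq_sub_of_hasDerivAt_of_le h (hy.mul hM.neg.rexp) hderiv
    intervalIntegrable_const
  simp only [intervalIntegral.integral_zero, Pi.mul_apply, Pi.neg_apply,
    intervalIntegral.integral_same, neg_zero, exp_zero, mul_one] at hconst
  rw [← sub_eq_zero.1 hconst.symm, mul_assoc, ← exp_add, neg_add_cancel, exp_zero, mul_one]

lemma exp_integral_eq_sqrt_div_mul_exp_integral {g h m : ℝ → ℝ} (hle : t₀ ≤ t₁)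
    (hg : ContinuousOn g (Icc t₀ t₁)) (hg₀ : 0 < g t₀)
    (hh : ContinuousOn h (Icc t₀ t₁)) (hm : ContinuousOn m (Icc t₀ t₁))
    (hg' : ∀ t ∈ Ioo t₀ t₁, HasDerivAt g (2 * (h t - m t) * g t) t) :
    exp (∫ s in t₀..t₁, h s) = √(g t₁ / g t₀) * exp (∫ s in t₀..t₁, m s) := by
  have hint : ∫ s in t₀..t₁, 2 * (h s - m s)
      = 2 * ((∫ s in t₀..t₁, h s) - ∫ s in t₀..t₁, m s) := by
    rw [intervalIntegral.integral_const_mul, intervalIntegral.integral_sub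
      (hh.intervalIntegrable_of_Icc hle) (hm.intervalIntegrable_of_Icc hle)]
  have hratio : g t₁ / g t₀ = exp ((∫ s in t₀..t₁, h s) - ∫ s in t₀..t₁, m s) ^ 2 := by
    rw [eq_mul_exp_integral_of_hasDerivAt (m := fun s => 2 * (h s - m s)) hle hg
      ((hh.sub hm).const_mul 2) hg', hint,
      mul_div_cancel_left₀ _ hg₀.ne', ← exp_nat_mul]
    norm_num
  rw [hratio, sqrt_sq (exp_pos _).le, ← exp_add, sub_add_cancel]

end ScalarLinearODE

section SegmentAverage

/-- The mean of `g` over the segment from `x` to `y`. Applied to a derivative it gives the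
difference quotient, including the value on the diagonal, where the quotient is `0 / 0`. -/
def segmentAverage (g : ℝ → ℝ) (x y : ℝ) : ℝ := ∫ θ in (0:ℝ)..1, g (x + θ * (y - x))

lemma segmentAverage_self (g : ℝ → ℝ) (x : ℝ) : segmentAverage g x x = g x := by
  simp [segmentAverage]

lemma segmentAverage_mul_sub {f f' : ℝ → ℝ} (hf : ∀ x, HasDerivAt f (f' x) x)
    (hf' : Continuous f') (x y : ℝ) : segmentAverage f' x y * (y - x) = f y - f x := by
  have h := intervalIntegral.integral_unitInterval_deriv_eq_sub (z₀ := x) (z₁ := y - x)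
    (Continuous.continuousOn (by fun_prop)) fun θ _ => hf (x + θ • (y - x))
  simpa only [segmentAverage, smul_eq_mul, add_sub_cancel, mul_comm] using h

lemma abs_segmentAverage_le {g : ℝ → ℝ} {p q x y C : ℝ} (hg : ∀ z ∈ Icc p q, |g z| ≤ C)
    (hx : x ∈ Icc p q) (hy : y ∈ Icc p q) : |segmentAverage g x y| ≤ C := by
  have h := intervalIntegral.norm_integral_le_of_norm_le_const (a := 0) (b := 1)
    (f := fun θ => g (x + θ * (y - x))) (C := C) fun θ hθ => ?_
  · simpa [segmentAverage] using h
  · rw [uIoc_of_le zero_le_one] at hθ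
    exact hg _ ((convex_Icc p q).add_smul_sub_mem hx hy (Ioc_subset_Icc_self hθ))

lemma continuousOn_segmentAverage {Z : Type*} [TopologicalSpace Z] {s : Set Z} {w : Z → ℝ → ℝ}
    {γ δ : Z → ℝ} (hw : ContinuousOn (Function.uncurry w) (s ×ˢ univ)) (hγ : ContinuousOn γ s)
    (hδ : ContinuousOn δ s) : ContinuousOn (fun z => segmentAverage (w z) (γ z) (δ z)) s := by
  rw [continuousOn_iff_continuous_domRestrict] at hγ hδ ⊢
  refine intervalIntegral.continuous_parametric_intervalIntegral_of_continuous'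
    (f := fun (z : s) θ => w z (γ z + θ * (δ z - γ z))) ?_ 0 1
  have hγ' : Continuous fun p : s × ℝ => γ p.1 := hγ.comp continuous_fst
  have hδ' : Continuous fun p : s × ℝ => δ p.1 := hδ.comp continuous_fst
  exact hw.comp_continuous (f := fun p : s × ℝ => ((p.1 : Z), γ p.1 + p.2 * (δ p.1 - γ p.1)))
    ((continuous_subtype_val.comp continuous_fst).prodMk
      (hγ'.add (continuous_snd.mul (hδ'.sub hγ')))) fun p => ⟨p.1.2, mem_univ _⟩

end SegmentAverage

section ScalarFlow

variable {t₀ t₁ : ℝ} {v v' X : ℝ → ℝ → ℝ}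

lemma integralCurve_sub_eq_mul_exp
    (hv : ∀ t ∈ Icc t₀ t₁, ∀ x, HasDerivAt (v t) (v' t x) x)
    (hv' : ContinuousOn (Function.uncurry v') (Icc t₀ t₁ ×ˢ univ)) {γ δ : ℝ → ℝ}
    (hγ : IsIntegralCurveOn γ v (Icc t₀ t₁)) (hδ : IsIntegralCurveOn δ v (Icc t₀ t₁))
    {t : ℝ} (ht : t ∈ Icc t₀ t₁) :
    δ t - γ t = (δ t₀ - γ t₀) * exp (∫ s in t₀..t, segmentAverage (v' s) (γ s) (δ s)) := by
  have hsub : Icc t₀ t ⊆ Icc t₀ t₁ := Icc_subset_Icc_right ht.2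
  refine eq_mul_exp_integral_of_hasDerivAt ht.1
    ((hδ.continuousOn.sub hγ.continuousOn).mono hsub)
    ((continuousOn_segmentAverage hv' hγ.continuousOn hδ.continuousOn).mono hsub) fun s hs => ?_
  have hsIcc : s ∈ Icc t₀ t₁ := hsub (Ioo_subset_Icc_self hs)
  have hnhds : Icc t₀ t₁ ∈ 𝓝 s := Icc_mem_nhds hs.1 (hs.2.trans_le ht.2)
  have hcont : Continuous (v' s) :=
    hv'.comp_continuous (Continuous.prodMk_right s) fun _ => ⟨hsIcc, mem_univ _⟩
  rw [Pi.sub_apply, segmentAverage_mul_sub (hv s hsIcc) hcont]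
  exact ((hδ s hsIcc).hasDerivAt hnhds).sub ((hγ s hsIcc).hasDerivAt hnhds)

lemma monotone_flow
    (hv : ∀ t ∈ Icc t₀ t₁, ∀ x, HasDerivAt (v t) (v' t x) x)
    (hv' : ContinuousOn (Function.uncurry v') (Icc t₀ t₁ ×ˢ univ)) (hX₀ : ∀ a, X t₀ a = a)
    (hX : ∀ a, IsIntegralCurveOn (fun t => X t a) v (Icc t₀ t₁)) {t : ℝ} (ht : t ∈ Icc t₀ t₁) :
    Monotone (X t) := fun a b hab => by
  rw [← sub_nonneg, integralCurve_sub_eq_mul_exp hv hv' (hX a) (hX b) ht, hX₀, hX₀]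
  exact mul_nonneg (sub_nonneg.2 hab) (exp_pos _).le

lemma exists_abs_segmentAverage_flow_le
    (hv : ∀ t ∈ Icc t₀ t₁, ∀ x, HasDerivAt (v t) (v' t x) x)
    (hv' : ContinuousOn (Function.uncurry v') (Icc t₀ t₁ ×ˢ univ)) (hX₀ : ∀ a, X t₀ a = a)
    (hX : ∀ a, IsIntegralCurveOn (fun t => X t a) v (Icc t₀ t₁)) (a : ℝ) :
    ∃ C, ∀ᶠ b in 𝓝 a, ∀ t ∈ Icc t₀ t₁, |segmentAverage (v' t) (X t a) (X t b)| ≤ C := by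
  obtain ⟨p, hp⟩ := isCompact_Icc.bddBelow_image (hX (a - 1)).continuousOn
  obtain ⟨q, hq⟩ := isCompact_Icc.bddAbove_image (hX (a + 1)).continuousOn
  have htube : ∀ b ∈ Icc (a - 1) (a + 1), ∀ t ∈ Icc t₀ t₁, X t b ∈ Icc p q := fun b hb t ht =>
    have hmono := monotone_flow hv hv' hX₀ hX ht
    ⟨(hp (mem_image_of_mem _ ht)).trans (hmono hb.1),
      (hmono hb.2).trans (hq (mem_image_of_mem _ ht))⟩
  obtain ⟨C, hC⟩ := (isCompact_Icc.prod isCompact_Icc).exists_bound_of_continuousOn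
    (hv'.mono (prod_mono_right (subset_univ (Icc p q))))
  refine ⟨C, ?_⟩
  have hnhds : Icc (a - 1) (a + 1) ∈ 𝓝 a := Icc_mem_nhds (sub_one_lt a) (lt_add_one a)
  filter_upwards [hnhds] with b hb t ht
  exact abs_segmentAverage_le (fun z hz => hC (t, z) ⟨ht, hz⟩)
    (htube a (mem_of_mem_nhds hnhds) t ht) (htube b hb t ht)

lemma continuous_flow
    (hv : ∀ t ∈ Icc t₀ t₁, ∀ x, HasDerivAt (v t) (v' t x) x)
    (hv' : ContinuousOn (Function.uncurry v') (Icc t₀ t₁ ×ˢ univ)) (hX₀ : ∀ a, X t₀ a = a)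
    (hX : ∀ a, IsIntegralCurveOn (fun t => X t a) v (Icc t₀ t₁)) {t : ℝ} (ht : t ∈ Icc t₀ t₁) :
    Continuous (X t) := continuous_iff_continuousAt.2 fun a => by
  obtain ⟨C, hC⟩ := exists_abs_segmentAverage_flow_le hv hv' hX₀ hX a
  have hbound : ∀ᶠ b in 𝓝 a, |X t b - X t a| ≤ |b - a| * exp (C * (t - t₀)) := by
    filter_upwards [hC] with b hb
    have hint := intervalIntegral.norm_integral_le_of_norm_le_const (a := t₀) (b := t) (C := C)
      (f := fun s => segmentAverage (v' s) (X s a) (X s b)) fun s hs => by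
        rw [uIoc_of_le ht.1] at hs
        exact hb s ⟨hs.1.le, hs.2.trans ht.2⟩
    rw [abs_of_nonneg (sub_nonneg.2 ht.1)] at hint
    rw [integralCurve_sub_eq_mul_exp hv hv' (hX a) (hX b) ht, hX₀, hX₀, abs_mul, abs_exp]
    gcongr
    exact (le_abs_self _).trans hint
  refine tendsto_iff_dist_tendsto_zero.2
    (squeeze_zero' (Eventually.of_forall fun _ => dist_nonneg) hbound ?_)
  exact Continuous.tendsto' (by fun_prop) a 0 (by simp)

lemma tendsto_integral_segmentAverage_flow (h : t₀ ≤ t₁)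
    (hv : ∀ t ∈ Icc t₀ t₁, ∀ x, HasDerivAt (v t) (v' t x) x)
    (hv' : ContinuousOn (Function.uncurry v') (Icc t₀ t₁ ×ˢ univ)) (hX₀ : ∀ a, X t₀ a = a)
    (hX : ∀ a, IsIntegralCurveOn (fun t => X t a) v (Icc t₀ t₁)) (a : ℝ) :
    Tendsto (fun b => ∫ s in t₀..t₁, segmentAverage (v' s) (X s a) (X s b)) (𝓝 a)
      (𝓝 (∫ s in t₀..t₁, v' s (X s a))) := by
  obtain ⟨C, hC⟩ := exists_abs_segmentAverage_flow_le hv hv' hX₀ hX a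
  have hIoc : Ι t₀ t₁ ⊆ Icc t₀ t₁ := uIoc_of_le h ▸ Ioc_subset_Icc_self
  refine intervalIntegral.tendsto_integral_filter_of_dominated_convergence (fun _ => C)
    (Eventually.of_forall fun b => ?_) ?_ intervalIntegrable_const
    (Eventually.of_forall fun s hs => ?_)
  · exact ((continuousOn_segmentAverage hv' (hX a).continuousOn (hX b).continuousOn).mono
      hIoc).aestronglyMeasurable measurableSet_uIoc
  · filter_upwards [hC] with b hb
    exact Eventually.of_forall fun s hs => hb s (hIoc hs)
  · have hcont : Continuous fun b => segmentAverage (v' s) (X s a) (X s b) := by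
      have hv's : Continuous (v' s) :=
        hv'.comp_continuous (Continuous.prodMk_right s) fun _ => ⟨hIoc hs, mem_univ _⟩
      rw [← continuousOn_univ]
      exact continuousOn_segmentAverage (w := fun _ => v' s)
        (hv's.comp continuous_snd).continuousOn continuousOn_const
        (continuous_flow hv hv' hX₀ hX (hIoc hs)).continuousOn
    simpa only [segmentAverage_self] using hcont.tendsto a

theorem hasDerivAt_flow (h : t₀ ≤ t₁)
    (hv : ∀ t ∈ Icc t₀ t₁, ∀ x, HasDerivAt (v t) (v' t x) x)
    (hv' : ContinuousOn (Function.uncurry v') (Icc t₀ t₁ ×ˢ univ)) (hX₀ : ∀ a, X t₀ a = a)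
    (hX : ∀ a, IsIntegralCurveOn (fun t => X t a) v (Icc t₀ t₁)) (a : ℝ) :
    HasDerivAt (X t₁) (exp (∫ s in t₀..t₁, v' s (X s a))) a := by
  have hlim := (tendsto_integral_segmentAverage_flow h hv hv' hX₀ hX a).rexp
  refine hasDerivAt_iff_tendsto_slope.2
    ((hlim.mono_left nhdsWithin_le_nhds).congr' ?_)
  filter_upwards [self_mem_nhdsWithin] with b hb
  rw [slope_def_field,
    integralCurve_sub_eq_mul_exp hv hv' (hX a) (hX b) (right_mem_Icc.2 h), hX₀, hX₀,
    mul_div_cancel_left₀ _ (sub_ne_zero.2 hb)]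

end ScalarFlow

section Slices

variable {g : ℝ → ℝ → ℝ} {I : Set ℝ} {t : ℝ}

lemma hasDerivAt_slice (hg : DifferentiableOn ℝ (Function.uncurry g) (I ×ˢ univ)) (ht : t ∈ I)
    (x : ℝ) :
    HasDerivAt (g t) (fderivWithin ℝ (Function.uncurry g) (I ×ˢ univ) (t, x) (0, 1)) x :=
  HasFDerivWithinAt.comp_hasDerivAt (f := fun y : ℝ => (t, y)) x
    (hg (t, x) ⟨ht, mem_univ _⟩).hasFDerivWithinAt
    ((hasDerivAt_const x t).prodMk (hasDerivAt_id x))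
    (Eventually.of_forall fun _ => ⟨ht, mem_univ _⟩)

lemma differentiable_slice (hg : DifferentiableOn ℝ (Function.uncurry g) (I ×ˢ univ))
    (ht : t ∈ I) : Differentiable ℝ (g t) :=
  fun x => (hasDerivAt_slice hg ht x).differentiableAt

lemma continuousOn_deriv_slice (hI : UniqueDiffOn ℝ I)
    (hg : ContDiffOn ℝ 1 (Function.uncurry g) (I ×ˢ univ)) :
    ContinuousOn (Function.uncurry fun t => deriv (g t)) (I ×ˢ univ) :=
  ((hg.continuousOn_fderivWithin (hI.prod uniqueDiffOn_univ) le_rfl).clm_apply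
    continuousOn_const).congr fun z hz =>
      (hasDerivAt_slice (hg.differentiableOn one_ne_zero) hz.1 z.2).deriv

lemma differentiableAt_uncurry_of_mem_nhds
    (hg : DifferentiableOn ℝ (Function.uncurry g) (I ×ˢ univ)) (hI : I ∈ 𝓝 t) (x : ℝ) :
    DifferentiableAt ℝ (Function.uncurry g) (t, x) :=
  (hg _ ⟨mem_of_mem_nhds hI, mem_univ x⟩).differentiableAt (prod_mem_nhds hI univ_mem)

lemma hasDerivAt_comp₂ {α β : ℝ → ℝ} {α' β' : ℝ}
    (hg : DifferentiableAt ℝ (Function.uncurry g) (α t, β t)) (hα : HasDerivAt α α' t)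
    (hβ : HasDerivAt β β' t) :
    HasDerivAt (fun s => g (α s) (β s)) (fderiv ℝ (Function.uncurry g) (α t, β t) (α', β')) t :=
  HasFDerivAt.comp_hasDerivAt (f := fun s => (α s, β s)) t hg.hasFDerivAt (hα.prodMk hβ)

lemma hasDerivAt_comp_curve {γ : ℝ → ℝ} {γ' : ℝ}
    (hg : DifferentiableAt ℝ (Function.uncurry g) (t, γ t)) (hγ : HasDerivAt γ γ' t) :
    HasDerivAt (fun s => g s (γ s)) (deriv (fun s => g s (γ t)) t + γ' * deriv (g t) (γ t)) t := by
  have htime := hasDerivAt_comp₂ hg (hasDerivAt_id t) (hasDerivAt_const t (γ t))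
  have hspace := hasDerivAt_comp₂ hg (hasDerivAt_const (γ t) t) (hasDerivAt_id (γ t))
  refine (hasDerivAt_comp₂ hg (hasDerivAt_id t) hγ).congr_deriv ?_
  simp only [id] at htime hspace
  rw [htime.deriv, hspace.deriv, ← smul_eq_mul, ← map_smul, ← map_add]
  simp

end Slices

section Characteristics

variable {t₀ T σ : ℝ} {k : ℝ → ℝ} {E w : ℝ → ℝ → ℝ}

lemma exp_integral_deriv_velocity_along_characteristic
    (hk : ContDiff ℝ 1 k) (hk_pos : ∀ y, 0 < k y)
    (hE : ContDiffOn ℝ 1 (Function.uncurry E) (Ico t₀ T ×ˢ univ))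
    (hw : ContinuousOn (Function.uncurry w) (Ico t₀ T ×ˢ univ))
    (hpde : ∀ t ∈ Ioo t₀ T, ∀ x,
      deriv (fun s => E s x) t = k (E t x) * (σ * deriv (E t) x - 2 * w t x))
    {γ : ℝ → ℝ} (hγ : IsIntegralCurveOn γ (fun t x => σ * k (E t x)) (Ico t₀ T))
    {t : ℝ} (ht : t ∈ Ico t₀ T) :
    exp (∫ s in t₀..t, σ * (deriv k (E s (γ s)) * deriv (E s) (γ s)))
      = √(k (E t (γ t)) / k (E t₀ (γ t₀))) *
        exp (∫ s in t₀..t, deriv k (E s (γ s)) * w s (γ s)) := by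
  have hsub : Icc t₀ t ⊆ Ico t₀ T := Icc_subset_Ico_right ht.2
  have hcurve : ContinuousOn (fun s => (s, γ s)) (Icc t₀ t) :=
    continuousOn_id.prodMk (hγ.continuousOn.mono hsub)
  have hmaps : MapsTo (fun s => (s, γ s)) (Icc t₀ t) (Ico t₀ T ×ˢ univ) :=
    fun s hs => ⟨hsub hs, mem_univ _⟩
  have hEγ : ContinuousOn (fun s => E s (γ s)) (Icc t₀ t) := hE.continuousOn.comp hcurve hmaps
  have hExγ : ContinuousOn (fun s => deriv (E s) (γ s)) (Icc t₀ t) :=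
    (continuousOn_deriv_slice (uniqueDiffOn_Ico t₀ T) hE).comp hcurve hmaps
  have hk'γ : ContinuousOn (fun s => deriv k (E s (γ s))) (Icc t₀ t) :=
    (hk.continuous_deriv le_rfl).comp_continuousOn hEγ
  refine exp_integral_eq_sqrt_div_mul_exp_integral (g := fun s => k (E s (γ s))) ht.1
    (hk.continuous.comp_continuousOn hEγ) (hk_pos _) ((hk'γ.mul hExγ).const_mul σ)
    (hk'γ.mul (hw.comp hcurve hmaps)) fun s hs => ?_
  have hs' : s ∈ Ioo t₀ T := ⟨hs.1, hs.2.trans ht.2⟩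
  have hnhds : Ico t₀ T ∈ 𝓝 s := Ico_mem_nhds hs'.1 hs'.2
  have hEs := hasDerivAt_comp_curve
    (differentiableAt_uncurry_of_mem_nhds (hE.differentiableOn one_ne_zero) hnhds (γ s))
    ((hγ s (Ioo_subset_Ico_self hs')).hasDerivAt hnhds)
  refine ((hk.differentiable one_ne_zero _).hasDerivAt.comp s hEs).congr_deriv ?_
  rw [hpde s hs' (γ s)]
  ring

theorem hasDerivAt_characteristicFlow
    (hk : ContDiff ℝ 1 k) (hk_pos : ∀ y, 0 < k y)
    (hE : ContDiffOn ℝ 1 (Function.uncurry E) (Ico t₀ T ×ˢ univ))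
    (hw : ContinuousOn (Function.uncurry w) (Ico t₀ T ×ˢ univ))
    (hpde : ∀ t ∈ Ioo t₀ T, ∀ x,
      deriv (fun s => E s x) t = k (E t x) * (σ * deriv (E t) x - 2 * w t x))
    {X : ℝ → ℝ → ℝ} (hX₀ : ∀ a, X t₀ a = a)
    (hX : ∀ a, IsIntegralCurveOn (fun t => X t a) (fun t x => σ * k (E t x)) (Ico t₀ T))
    {t : ℝ} (ht : t ∈ Ico t₀ T) (a : ℝ) :
    HasDerivAt (X t) (√(k (E t (X t a)) / k (E t₀ a)) *
      exp (∫ s in t₀..t, deriv k (E s (X s a)) * w s (X s a))) a := by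
  have hsub : Icc t₀ t ⊆ Ico t₀ T := Icc_subset_Ico_right ht.2
  have hv : ∀ s ∈ Icc t₀ t, ∀ x,
      HasDerivAt (fun y => σ * k (E s y)) (σ * (deriv k (E s x) * deriv (E s) x)) x :=
    fun s hs x => ((hk.differentiable one_ne_zero _).hasDerivAt.comp x
      (differentiable_slice (hE.differentiableOn one_ne_zero) (hsub hs) x).hasDerivAt).const_mul σ
  have hv' : ContinuousOn (Function.uncurry fun s x => σ * (deriv k (E s x) * deriv (E s) x))
      (Icc t₀ t ×ˢ univ) :=
    ((((hk.continuous_deriv le_rfl).comp_continuousOn hE.continuousOn).mul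
      (continuousOn_deriv_slice (uniqueDiffOn_Ico t₀ T) hE)).const_mul σ).mono
        (prod_mono_left hsub)
  have hflow := hasDerivAt_flow ht.1 hv hv' hX₀ (fun b => (hX b).mono hsub) a
  rwa [exp_integral_deriv_velocity_along_characteristic hk hk_pos hE hw hpde (hX a) ht,
    hX₀] at hflow

end Characteristics

section SoundSpeed

lemma hasDerivAt_Lfun (u : ℝ) : HasDerivAt Lfun √(1 + u ^ 2) u := by
  have hpos : 0 < 1 + u ^ 2 := by positivity
  have hsqrt : HasDerivAt (fun u : ℝ => √(1 + u ^ 2)) (2 * u / (2 * √(1 + u ^ 2))) u :=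
    HasDerivAt.sqrt (by simpa using (hasDerivAt_pow 2 u).const_add 1) hpos.ne'
  refine ((((hasDerivAt_id u).mul hsqrt).add (hasDerivAt_arsinh u)).const_mul
    (1 / 2 : ℝ)).congr_deriv ?_
  have hsq : √(1 + u ^ 2) ^ 2 = 1 + u ^ 2 := sq_sqrt hpos.le
  simp only [id]
  field_simp
  rw [hsq]
  ring

lemma contDiff_Lfun {n : WithTop ℕ∞} : ContDiff ℝ n Lfun :=
  contDiff_const.mul ((contDiff_id.mul
    (ContDiff.sqrt (by fun_prop) fun u => by positivity)).add contDiff_arsinh)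

lemma strictMono_Lfun : StrictMono Lfun :=
  strictMono_of_deriv_pos fun u => by
    rw [(hasDerivAt_Lfun u).deriv]
    positivity

lemma Lfun_neg (u : ℝ) : Lfun (-u) = -Lfun u := by
  simp only [Lfun, neg_sq, arsinh_neg]
  ring

lemma half_le_Lfun {u : ℝ} (hu : 0 ≤ u) : u / 2 ≤ Lfun u := by
  have harsinh : 0 ≤ arsinh u := arsinh_nonneg_iff.2 hu
  have hsqrt : 1 ≤ √(1 + u ^ 2) := one_le_sqrt.2 (le_add_of_nonneg_right (sq_nonneg u))
  unfold Lfun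
  nlinarith

lemma surjective_Lfun : Function.Surjective Lfun := by
  have htop : Tendsto Lfun atTop atTop :=
    tendsto_atTop_mono' atTop ((eventually_ge_atTop 0).mono fun _ => half_le_Lfun)
      (tendsto_id.atTop_div_const two_pos)
  have hbot : Tendsto Lfun atBot atBot :=
    (tendsto_neg_atTop_atBot.comp (htop.comp tendsto_neg_atBot_atTop)).congr fun u => by
      simp only [Function.comp_apply, Lfun_neg, neg_neg]
  exact contDiff_Lfun.continuous (n := 0).surjective htop hbot

lemma contDiff_invFun_Lfun {n : WithTop ℕ∞} : ContDiff ℝ n (Function.invFun Lfun) := by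
  let e := (strictMono_Lfun.orderIsoOfSurjective Lfun surjective_Lfun).toHomeomorph
  have hinv : Function.invFun Lfun = e.symm := funext fun y => strictMono_Lfun.injective
    ((Function.invFun_eq (surjective_Lfun y)).trans (e.apply_symm_apply y).symm)
  rw [hinv]
  exact e.contDiff_symm_deriv (fun u => by positivity) hasDerivAt_Lfun contDiff_Lfun

lemma kfun_pos (y : ℝ) : 0 < kfun y := sqrt_pos.2 (by positivity)

lemma contDiff_kfun {n : WithTop ℕ∞} : ContDiff ℝ n kfun := by
  have hu : ContDiff ℝ n u1hat := contDiff_invFun_Lfun.comp (by fun_prop)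
  exact ContDiff.sqrt (by fun_prop) fun y => by positivity

lemma Afun_inv_mul_ffun_mul_weight (lam t y d : ℝ) :
    (Afun lam t)⁻¹ * ffun y * (Afun lam t * √(kfun y) * d) = deriv kfun y * d := by
  have hA : Afun lam t ≠ 0 := (exp_pos _).ne'
  have hk : √(kfun y) ≠ 0 := (sqrt_pos.2 (kfun_pos y)).ne'
  unfold ffun
  field_simp

end SoundSpeed

lemma deriv_etafun_time_eq {r l : ℝ → ℝ → ℝ} {t x S : ℝ}
    (hr : DifferentiableAt ℝ (Function.uncurry r) (t, x))
    (hl : DifferentiableAt ℝ (Function.uncurry l) (t, x))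
    (hsys_r : deriv (fun s => r s x) t + kfun (etafun r l t x) * deriv (r t) x = S)
    (hsys_l : deriv (fun s => l s x) t - kfun (etafun r l t x) * deriv (l t) x = S) :
    deriv (fun s => etafun r l s x) t
      = -kfun (etafun r l t x) * (deriv (r t) x + deriv (l t) x) := by
  have hsub : deriv (fun s => etafun r l s x) t
      = deriv (fun s => r s x) t - deriv (fun s => l s x) t :=
    deriv_fun_sub (hasDerivAt_comp₂ hr (hasDerivAt_id t) (hasDerivAt_const t x)).differentiableAt
      (hasDerivAt_comp₂ hl (hasDerivAt_id t) (hasDerivAt_const t x)).differentiableAt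
  linear_combination hsub + hsys_r - hsys_l

theorem infinitesimal_compression_ratios_general
    (lam T : ℝ) (r l S : ℝ → ℝ → ℝ)
    (hreg_r : ContDiffOn ℝ 1 (Function.uncurry r) (Ico 0 T ×ˢ univ))
    (hreg_l : ContDiffOn ℝ 1 (Function.uncurry l) (Ico 0 T ×ˢ univ))
    (hsys_r : ∀ t ∈ Ioo 0 T, ∀ x,
      deriv (fun s => r s x) t + kfun (etafun r l t x) * deriv (r t) x = S t x)
    (hsys_l : ∀ t ∈ Ioo 0 T, ∀ x,
      deriv (fun s => l s x) t - kfun (etafun r l t x) * deriv (l t) x = S t x)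
    (x₁ x₂ : ℝ → ℝ → ℝ) (hx₁0 : ∀ a, x₁ 0 a = a)
    (hx₁ : ∀ a, IsIntegralCurveOn (fun t => x₁ t a) (fun t x => kfun (etafun r l t x)) (Ico 0 T))
    (hx₂0 : ∀ b, x₂ 0 b = b)
    (hx₂ : ∀ b, IsIntegralCurveOn (fun t => x₂ t b) (fun t x => -kfun (etafun r l t x)) (Ico 0 T)) :
    ∀ t ∈ Ico 0 T,
      (∀ a,
        deriv (x₁ t) a = √(kfun (etafun r l t (x₁ t a)) / kfun (etafun r l 0 a)) *
          exp (∫ τ in (0:ℝ)..t,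
            (Afun lam τ)⁻¹ * ffun (etafun r l τ (x₁ τ a)) * pfun lam r l τ (x₁ τ a)) ∧
        0 < deriv (x₁ t) a) ∧
      (∀ b,
        deriv (x₂ t) b = √(kfun (etafun r l t (x₂ t b)) / kfun (etafun r l 0 b)) *
          exp (∫ τ in (0:ℝ)..t,
            (Afun lam τ)⁻¹ * ffun (etafun r l τ (x₂ τ b)) * qfun lam r l τ (x₂ τ b)) ∧
        0 < deriv (x₂ t) b) := by
  have hr := hreg_r.differentiableOn one_ne_zero
  have hl := hreg_l.differentiableOn one_ne_zero
  have hη : ContDiffOn ℝ 1 (Function.uncurry (etafun r l)) (Ico 0 T ×ˢ univ) := hreg_r.sub hreg_l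
  have hη_x : ∀ t ∈ Ioo 0 T, ∀ x,
      deriv (etafun r l t) x = deriv (r t) x - deriv (l t) x := fun t ht x =>
    have htIco := Ioo_subset_Ico_self ht
    deriv_fun_sub (differentiable_slice hr htIco x) (differentiable_slice hl htIco x)
  have hη_t : ∀ t ∈ Ioo 0 T, ∀ x, deriv (fun s => etafun r l s x) t
      = -kfun (etafun r l t x) * (deriv (r t) x + deriv (l t) x) := fun t ht x =>
    have hnhds : Ico 0 T ∈ 𝓝 t := Ico_mem_nhds ht.1 ht.2
    deriv_etafun_time_eq (differentiableAt_uncurry_of_mem_nhds hr hnhds x)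
      (differentiableAt_uncurry_of_mem_nhds hl hnhds x) (hsys_r t ht x) (hsys_l t ht x)
  have hpos : ∀ y z u : ℝ, 0 < √(kfun y / kfun z) * exp u := fun y z u =>
    mul_pos (sqrt_pos.2 (div_pos (kfun_pos y) (kfun_pos z))) (exp_pos u)
  intro t ht
  simp only [pfun, qfun, Afun_inv_mul_ffun_mul_weight]
  refine ⟨fun a => ?_, fun b => ?_⟩
  · have hflow := hasDerivAt_characteristicFlow (σ := 1) contDiff_kfun kfun_pos hη
      (continuousOn_deriv_slice (uniqueDiffOn_Ico 0 T) hreg_r)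
      (fun s hs x => by rw [hη_t s hs x, hη_x s hs x]; ring) hx₁0 (by simpa only [one_mul]) ht a
    exact ⟨hflow.deriv, hflow.deriv ▸ hpos _ _ _⟩
  · have hflow := hasDerivAt_characteristicFlow (σ := -1) contDiff_kfun kfun_pos hη
      (continuousOn_deriv_slice (uniqueDiffOn_Ico 0 T) hreg_l)
      (fun s hs x => by rw [hη_t s hs x, hη_x s hs x]; ring) hx₂0 (by simpa only [neg_one_mul])
      ht b
    exact ⟨hflow.deriv, hflow.deriv ▸ hpos _ _ _⟩

/-- explicit formula and strict positivity of the infinitesimal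
compression ratios `c₁ = ∂_α x₁` and `c₂ = ∂_β x₂` of the characteristic flows. -/
theorem infinitesimal_compression_ratios
    (lam T : ℝ) (hlam : 0 < lam)
    (r l : ℝ → ℝ → ℝ) (r₀ : ℝ → ℝ)
    (hreg_r : ContDiffOn ℝ 2 (Function.uncurry r) (Set.Ico 0 T ×ˢ (Set.univ : Set ℝ)))
    (hreg_l : ContDiffOn ℝ 2 (Function.uncurry l) (Set.Ico 0 T ×ˢ (Set.univ : Set ℝ)))
    (hsys_r : ∀ t ∈ Set.Ico (0:ℝ) T, ∀ x : ℝ,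
      deriv (fun s => r s x) t + kfun (etafun r l t x) * deriv (fun y => r t y) x
        = -(lam/2) * (r t x + l t x))
    (hsys_l : ∀ t ∈ Set.Ico (0:ℝ) T, ∀ x : ℝ,
      deriv (fun s => l s x) t - kfun (etafun r l t x) * deriv (fun y => l t y) x
        = -(lam/2) * (r t x + l t x))
    (hr0 : ∀ x : ℝ, r 0 x = r₀ x)
    (hl0 : ∀ x : ℝ, l 0 x = -r₀ x)
    (x₁ x₂ : ℝ → ℝ → ℝ)
    (hflowreg₁ : ContDiffOn ℝ 1 (Function.uncurry x₁) (Set.Ico 0 T ×ˢ (Set.univ : Set ℝ)))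
    (hflowreg₂ : ContDiffOn ℝ 1 (Function.uncurry x₂) (Set.Ico 0 T ×ˢ (Set.univ : Set ℝ)))
    (hx₁0 : ∀ a : ℝ, x₁ 0 a = a)
    (hx₁ : ∀ a : ℝ, ∀ t ∈ Set.Ico (0:ℝ) T,
      HasDerivAt (fun s => x₁ s a) (kfun (etafun r l t (x₁ t a))) t)
    (hx₂0 : ∀ b : ℝ, x₂ 0 b = b)
    (hx₂ : ∀ b : ℝ, ∀ t ∈ Set.Ico (0:ℝ) T,
      HasDerivAt (fun s => x₂ s b) (-(kfun (etafun r l t (x₂ t b)))) t) :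
    ∀ t ∈ Set.Ico (0:ℝ) T,
      (∀ a : ℝ,
        deriv (fun a' => x₁ t a') a
          = Real.sqrt (kfun (etafun r l t (x₁ t a)) / kfun (2 * r₀ a)) *
            Real.exp (∫ τ in (0:ℝ)..t,
              (Afun lam τ)⁻¹ * ffun (etafun r l τ (x₁ τ a)) * pfun lam r l τ (x₁ τ a)) ∧
        0 < deriv (fun a' => x₁ t a') a) ∧
      (∀ b : ℝ,
        deriv (fun b' => x₂ t b') b
          = Real.sqrt (kfun (etafun r l t (x₂ t b)) / kfun (2 * r₀ b)) *
            Real.exp (∫ τ in (0:ℝ)..t,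
              (Afun lam τ)⁻¹ * ffun (etafun r l τ (x₂ τ b)) * qfun lam r l τ (x₂ τ b)) ∧
        0 < deriv (fun b' => x₂ t b') b) := by
  have hη₀ : ∀ a, 2 * r₀ a = etafun r l 0 a := fun a => by rw [etafun, hr0, hl0]; ring
  simpa only [hη₀] using infinitesimal_compression_ratios_general lam T r l
    (fun t x => -(lam / 2) * (r t x + l t x)) (hreg_r.of_le one_le_two)
    (hreg_l.of_le one_le_two) (fun t ht => hsys_r t (Ioo_subset_Ico_self ht))
    (fun t ht => hsys_l t (Ioo_subset_Ico_self ht)) x₁ x₂ hx₁0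
    (fun a t ht => (hx₁ a t ht).hasDerivWithinAt) hx₂0
    fun b t ht => (hx₂ b t ht).hasDerivWithinAt
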